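/- For w, x ∈ ℂ write c_{(k,l)}(w; x) = exp(2πi d k x / n) · σ(w + (d/n)(kτ + l), x). In Mat_n(ℂ)^{⊗3}, realized as n³×n³ complex matrices via iterated Kronecker products, define r^{12}(w; x) = ∑_{(k,l)} c_{(k,l)}(w; x) · Z^∨_{(k,l)} ⊗ Z_{(k,l)} ⊗ 𝟙, r^{13}(w; x) = ∑_{(k,l)} c_{(k,l)}(w; x) · Z^∨_{(k,l)} ⊗ 𝟙 ⊗ Z_{(k,l)}, and r^{23}(w; x) = ∑_{(k,l)} c_{(k,l)}(w; x) · 𝟙 ⊗ Z^∨_{(k,l)} ⊗ Z_{(k,l)}, the sums running over (k,l) ∈ {1,…,n}². Then for all u, v, x₁, x₂, x₃ ∈ ℂ such that θ̄(x₂−x₁) ≠ 0, θ̄(x₃−x₂) ≠ 0, θ̄(x₃−x₁) ≠ 0, and θ̄(w + (d/n)(kτ + l)) ≠ 0 for every w ∈ {u, v, −v, u+v} and every (k,l) ∈ {1,…,n}², the associative Yang–Baxter equation holds: r^{12}(u; x₂−x₁) · r^{23}(u+v; x₃−x₂) = r^{13}(u+v; x₃−x₁) · r^{12}(−v; x₂−x₁)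 + r^{23}(v; x₃−x₂) · r^{13}(u; x₃−x₁), where · is matrix multiplication of n³×n³ matrices. -/

import Mathlib

open Complex Matrix
open scoped Kronecker

noncomputable section

/-- `ε = exp(2πi d/n)`. -/
def eps (n d : ℕ) : ℂ := Complex.exp (2 * Real.pi * Complex.I * d / n)

/-- The diagonal matrix `X = diag(1, ε, ε², …, ε^{n−1})`. -/
def Xmat (n d : ℕ) : Matrix (Fin n) (Fin n) ℂ :=
  Matrix.diagonal fun i => eps n d ^ (i : ℕ)

/-- The cyclic shift matrix `Y` with `Y_{i,j} = 1` iff `j ≡ i+1 (mod n)`. -/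
def Ymat (n : ℕ) : Matrix (Fin n) (Fin n) ℂ :=
  Matrix.of fun i j => if (j : ℕ) = ((i : ℕ) + 1) % n then 1 else 0

/-- `Z_{(k,l)} = Y^k X^{−l}`. -/
def Zmat (n d : ℕ) (k l : ℕ) : Matrix (Fin n) (Fin n) ℂ :=
  Ymat n ^ k * (Xmat n d)⁻¹ ^ l

/-- `Z^∨_{(k,l)} = (1/n) X^l Y^{−k}`. -/
def Zdual (n d : ℕ) (k l : ℕ) : Matrix (Fin n) (Fin n) ℂ :=
  (n : ℂ)⁻¹ • (Xmat n d ^ l * (Ymat n)⁻¹ ^ k)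

/-- The third Jacobi theta function `θ(z) = ∑_{m ∈ ℤ} exp(πiτm² + 2πimz)`. -/
def theta3 (τ z : ℂ) : ℂ :=
  ∑' m : ℤ, Complex.exp (Real.pi * Complex.I * τ * (m : ℂ) ^ 2 +
    2 * Real.pi * Complex.I * (m : ℂ) * z)

/-- The first Jacobi theta function
`θ̄(z) = 2 exp(πiτ/4) ∑_{m ≥ 0} (−1)^m exp(πiτ m(m+1)) sin((2m+1)πz)`. -/
def theta1 (τ z : ℂ) : ℂ :=
  2 * Complex.exp (Real.pi * Complex.I * τ / 4) *
    ∑' m : ℕ, (-1 : ℂ) ^ m * Complex.exp (Real.pi * Complex.I * τ * (m : ℂ) * ((m : ℂ) + 1)) *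
      Complex.sin ((2 * (m : ℂ) + 1) * Real.pi * z)

/-- The Kronecker elliptic function `σ(u, z) = θ̄′(0) θ̄(u+z) / (θ̄(u) θ̄(z))`. -/
def sigmaK (τ u z : ℂ) : ℂ :=
  deriv (theta1 τ) 0 * theta1 τ (u + z) / (theta1 τ u * theta1 τ z)

/-- The scalar coefficient `c_{(k,l)}(w; x) = exp(2πi d k x/n) σ(w + (d/n)(kτ + l), x)`. -/
def ckl (n d : ℕ) (τ : ℂ) (k l : ℕ) (w x : ℂ) : ℂ :=
  Complex.exp (2 * Real.pi * Complex.I * d * k * x / n) *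
    sigmaK τ (w + ((d : ℂ) / n) * (k * τ + l)) x

/-- `r^{12}(w;x) = ∑ c_{(k,l)}(w;x) Z^∨_{(k,l)} ⊗ Z_{(k,l)} ⊗ 𝟙`. -/
def r12 (n d : ℕ) (τ : ℂ) (w x : ℂ) :
    Matrix ((Fin n × Fin n) × Fin n) ((Fin n × Fin n) × Fin n) ℂ :=
  ∑ p : Fin n × Fin n, ckl n d τ (p.1.1 + 1) (p.2.1 + 1) w x •
    ((Zdual n d (p.1.1 + 1) (p.2.1 + 1) ⊗ₖ Zmat n d (p.1.1 + 1) (p.2.1 + 1)) ⊗ₖ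
      (1 : Matrix (Fin n) (Fin n) ℂ))

/-- `r^{13}(w;x) = ∑ c_{(k,l)}(w;x) Z^∨_{(k,l)} ⊗ 𝟙 ⊗ Z_{(k,l)}`. -/
def r13 (n d : ℕ) (τ : ℂ) (w x : ℂ) :
    Matrix ((Fin n × Fin n) × Fin n) ((Fin n × Fin n) × Fin n) ℂ :=
  ∑ p : Fin n × Fin n, ckl n d τ (p.1.1 + 1) (p.2.1 + 1) w x •
    ((Zdual n d (p.1.1 + 1) (p.2.1 + 1) ⊗ₖ (1 : Matrix (Fin n) (Fin n) ℂ)) ⊗ₖ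
      Zmat n d (p.1.1 + 1) (p.2.1 + 1))

/-- `r^{23}(w;x) = ∑ c_{(k,l)}(w;x) 𝟙 ⊗ Z^∨_{(k,l)} ⊗ Z_{(k,l)}`. -/
def r23 (n d : ℕ) (τ : ℂ) (w x : ℂ) :
    Matrix ((Fin n × Fin n) × Fin n) ((Fin n × Fin n) × Fin n) ℂ :=
  ∑ p : Fin n × Fin n, ckl n d τ (p.1.1 + 1) (p.2.1 + 1) w x •
    (((1 : Matrix (Fin n) (Fin n) ℂ) ⊗ₖ Zdual n d (p.1.1 + 1) (p.2.1 + 1)) ⊗ₖ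
      Zmat n d (p.1.1 + 1) (p.2.1 + 1))

/-!
Each `Z^∨_a` is `n⁻¹ Z_a⁻¹`, and `a ↦ Z_a` is a projective representation of `(ℤ/n)²`. Scalars
cancel in `Z_a⁻¹ ⊗ Z_a`, so each of the three products in the associative Yang–Baxter equation is
a combination of the same tensors `Z_a⁻¹ ⊗ Z_a Z_b⁻¹ ⊗ Z_b`, and comparing coefficients leaves
Fay's identity for `σ` twisted by the characteristics `d (k, l) / n`. Fay's identity is the
three-term relation for `θ̄`, which follows from writing `θ̄(a + b) θ̄(a - b)` as the determinant
`F(a) G(b) - G(a) F(b)` of theta functions of modulus `2τ`.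
-/

section Theta

/-- `(s, t) ↦ (s + t, s - t)` and `(s, t) ↦ (s + t + 1, s - t)`, which parametrise the pairs of
integers of equal and of opposite parity. -/
def intPairParityEquiv : (ℤ × ℤ) ⊕ (ℤ × ℤ) ≃ ℤ × ℤ :=
  Equiv.ofBijective
    (Sum.elim (fun p => (p.1 + p.2, p.1 - p.2)) (fun p => (p.1 + p.2 + 1, p.1 - p.2))) <| by
    constructor
    · rintro (⟨s, t⟩ | ⟨s, t⟩) (⟨s', t'⟩ | ⟨s', t'⟩) h <;>
        simp only [Sum.elim_inl, Sum.elim_inr, Prod.mk.injEq] at h <;>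
        simp only [Sum.inl.injEq, Sum.inr.injEq, Prod.mk.injEq, reduceCtorEq] <;> omega
    · rintro ⟨a, b⟩
      obtain ⟨s, hs | hs⟩ := Int.even_or_odd' (a + b)
      · exact ⟨.inl (s, a - s), by simp only [Sum.elim_inl, Prod.mk.injEq]; omega⟩
      · exact ⟨.inr (s, a - s - 1), by simp only [Sum.elim_inr, Prod.mk.injEq]; omega⟩

lemma hasSum_prod_mul {ι ι' R : Type*} [NormedRing R] [NormedSpace ℝ R] [FiniteDimensional ℝ R]
    {f : ι → R} {g : ι' → R} {a b : R} (hf : HasSum f a) (hg : HasSum g b) :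
    HasSum (fun p : ι × ι' => f p.1 * g p.2) (a * b) :=
  have := FiniteDimensional.complete ℝ R
  hf.mul hg (summable_mul_of_summable_norm hf.summable.norm hg.summable.norm)

lemma jacobiTheta₂_term_mul_of_equal_parity (x y τ : ℂ) (s t : ℤ) :
    jacobiTheta₂_term (s + t) x τ * jacobiTheta₂_term (s - t) y τ =
      jacobiTheta₂_term s (x + y) (2 * τ) * jacobiTheta₂_term t (x - y) (2 * τ) := by
  simp only [jacobiTheta₂_term, ← exp_add]
  push_cast
  ring_nf

lemma jacobiTheta₂_term_mul_of_opposite_parity (x y τ : ℂ) (s t : ℤ) :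
    jacobiTheta₂_term (s + t + 1) x τ * jacobiTheta₂_term (s - t) y τ =
      exp (Real.pi * I * (τ + 2 * x)) *
        (jacobiTheta₂_term s (x + y + τ) (2 * τ) * jacobiTheta₂_term t (x - y + τ) (2 * τ)) := by
  simp only [jacobiTheta₂_term, ← exp_add]
  push_cast
  ring_nf

lemma jacobiTheta₂_mul_jacobiTheta₂ {τ : ℂ} (hτ : 0 < τ.im) (x y : ℂ) :
    jacobiTheta₂ x τ * jacobiTheta₂ y τ =
      jacobiTheta₂ (x + y) (2 * τ) * jacobiTheta₂ (x - y) (2 * τ) +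
        exp (Real.pi * I * (τ + 2 * x)) *
          (jacobiTheta₂ (x + y + τ) (2 * τ) * jacobiTheta₂ (x - y + τ) (2 * τ)) := by
  have hτ2 : 0 < (2 * τ).im := by simpa using hτ
  have all_pairs := hasSum_prod_mul (hasSum_jacobiTheta₂_term x hτ) (hasSum_jacobiTheta₂_term y hτ)
  have equal_parity := hasSum_prod_mul (hasSum_jacobiTheta₂_term (x + y) hτ2)
    (hasSum_jacobiTheta₂_term (x - y) hτ2)
  have opposite_parity := (hasSum_prod_mul (hasSum_jacobiTheta₂_term (x + y + τ) hτ2)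
    (hasSum_jacobiTheta₂_term (x - y + τ) hτ2)).mul_left (exp (Real.pi * I * (τ + 2 * x)))
  simp only [← jacobiTheta₂_term_mul_of_equal_parity] at equal_parity
  simp only [← jacobiTheta₂_term_mul_of_opposite_parity] at opposite_parity
  exact (intPairParityEquiv.hasSum_iff.mpr all_pairs).unique (equal_parity.sum opposite_parity)

lemma exp_mul_jacobiTheta₂_term_add_half_period (τ z : ℂ) (m : ℤ) :
    exp (Real.pi * I * z) * jacobiTheta₂_term m (z + 1 / 2 + τ / 2) τ =
      (-1) ^ m * exp (Real.pi * I * τ * m * (m + 1)) * exp ((2 * m + 1) * Real.pi * z * I) := by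
  rw [jacobiTheta₂_term, ← exp_pi_mul_I, ← exp_int_mul, ← exp_add, ← exp_add, ← exp_add]
  ring_nf

lemma theta1_eq_jacobiTheta₂ {τ : ℂ} (hτ : 0 < τ.im) (z : ℂ) :
    theta1 τ z = -I * exp (Real.pi * I * (τ / 4 + z)) * jacobiTheta₂ (z + 1 / 2 + τ / 2) τ := by
  have h := (hasSum_jacobiTheta₂_term (z + 1 / 2 + τ / 2) hτ).mul_left (exp (Real.pi * I * z))
  simp only [exp_mul_jacobiTheta₂_term_add_half_period] at h
  rw [mul_add, exp_add, mul_assoc, mul_assoc, ← h.nat_add_neg_add_one.tsum_eq, theta1,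
    ← tsum_mul_left, ← tsum_mul_left, ← tsum_mul_left]
  congr 1
  funext m
  have sign : (-1 : ℂ) ^ (-((m : ℤ) + 1)) = -(-1) ^ m := by
    rw [_root_.zpow_neg, ← _root_.inv_zpow, inv_neg_one, zpow_add_one₀ (by norm_num),
      zpow_natCast, mul_neg_one]
  have gaussian : Real.pi * I * τ * (-(m + 1)) * (-(m + 1) + 1) =
      Real.pi * I * τ * m * (m + 1) := by
    ring
  have freq : (2 * (-(m + 1)) + 1) * Real.pi * z * I = -((2 * (m : ℂ) + 1) * Real.pi * z) * I := by
    ring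
  rw [sign, zpow_natCast, sin]
  push_cast
  rw [gaussian, freq, mul_div_assoc']
  ring_nf

lemma theta1_neg (τ z : ℂ) : theta1 τ (-z) = -theta1 τ z := by
  simp [theta1, tsum_neg]

lemma theta1_add_one (τ z : ℂ) : theta1 τ (z + 1) = -theta1 τ z := by
  have sin_add (m : ℕ) : sin ((2 * m + 1) * Real.pi * (z + 1)) =
      -sin ((2 * m + 1) * Real.pi * z) := by
    have h := sin_antiperiodic.add_nat_mul_eq (2 * m + 1) (x := (2 * m + 1) * Real.pi * z)
    rw [(odd_two_mul_add_one m).neg_one_pow, neg_one_mul] at h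
    rw [← h]
    push_cast
    ring_nf
  simp only [theta1, sin_add, mul_neg, tsum_neg]

lemma theta1_add_tau {τ : ℂ} (hτ : 0 < τ.im) (z : ℂ) :
    theta1 τ (z + τ) = -exp (-(Real.pi * I * (τ + 2 * z))) * theta1 τ z := by
  have factor : exp (Real.pi * I * (τ / 4 + (z + τ))) *
      exp (-Real.pi * I * (τ + 2 * (z + 1 / 2 + τ / 2))) =
      -exp (-(Real.pi * I * (τ + 2 * z))) * exp (Real.pi * I * (τ / 4 + z)) := by
    rw [neg_mul (exp _), ← exp_add, ← exp_add, ← exp_sub_pi_mul_I]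
    ring_nf
  rw [theta1_eq_jacobiTheta₂ hτ, theta1_eq_jacobiTheta₂ hτ,
    show z + τ + 1 / 2 + τ / 2 = z + 1 / 2 + τ / 2 + τ by ring, jacobiTheta₂_add_left']
  linear_combination -I * jacobiTheta₂ (z + 1 / 2 + τ / 2) τ * factor

/-- The odd half of the theta series of modulus `2τ`: classically, this is `θ₂(2z | 2τ)`. It is
paired with `jacobiTheta₂ (2 * z) (2 * τ)`, which is `θ₃(2z | 2τ)`. -/
def thetaOdd (τ z : ℂ) : ℂ :=
  exp (Real.pi * I * (τ / 2 + 2 * z)) * jacobiTheta₂ (2 * z + τ) (2 * τ)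

lemma theta1_add_mul_theta1_sub {τ : ℂ} (hτ : 0 < τ.im) (a b : ℂ) :
    theta1 τ (a + b) * theta1 τ (a - b) =
      jacobiTheta₂ (2 * a) (2 * τ) * thetaOdd τ b -
        thetaOdd τ a * jacobiTheta₂ (2 * b) (2 * τ) := by
  have product := jacobiTheta₂_mul_jacobiTheta₂ hτ (a + b + 1 / 2 + τ / 2) (a - b + 1 / 2 + τ / 2)
  rw [show a + b + 1 / 2 + τ / 2 + (a - b + 1 / 2 + τ / 2) = 2 * a + τ + 1 by ring,
    show a + b + 1 / 2 + τ / 2 - (a - b + 1 / 2 + τ / 2) = 2 * b by ring,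
    show 2 * a + τ + 1 + τ = 2 * a + 2 * τ + 1 by ring,
    jacobiTheta₂_add_left, jacobiTheta₂_add_left, jacobiTheta₂_add_left'] at product
  have even_factor : exp (Real.pi * I * (τ / 4 + (a + b))) *
      exp (Real.pi * I * (τ / 4 + (a - b))) = exp (Real.pi * I * (τ / 2 + 2 * a)) := by
    rw [← exp_add]
    ring_nf
  have odd_factor : exp (Real.pi * I * (τ / 2 + 2 * a)) *
      (exp (Real.pi * I * (τ + 2 * (a + b + 1 / 2 + τ / 2))) *
        exp (-Real.pi * I * (2 * τ + 2 * (2 * a)))) = -exp (Real.pi * I * (τ / 2 + 2 * b)) := by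
    rw [← exp_add, ← exp_add, ← exp_add_pi_mul_I]
    ring_nf
  rw [theta1_eq_jacobiTheta₂ hτ, theta1_eq_jacobiTheta₂ hτ, mul_mul_mul_comm, product,
    mul_mul_mul_comm, neg_mul_neg, I_mul_I, even_factor, thetaOdd, thetaOdd]
  linear_combination
    -jacobiTheta₂ (2 * a) (2 * τ) * jacobiTheta₂ (2 * b + τ) (2 * τ) * odd_factor

lemma theta1_three_term {τ : ℂ} (hτ : 0 < τ.im) (a b c d : ℂ) :
    theta1 τ (a + b) * theta1 τ (a - b) * (theta1 τ (c + d) * theta1 τ (c - d)) =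
      theta1 τ (a + c) * theta1 τ (a - c) * (theta1 τ (b + d) * theta1 τ (b - d)) -
        theta1 τ (a + d) * theta1 τ (a - d) * (theta1 τ (b + c) * theta1 τ (b - c)) := by
  simp only [theta1_add_mul_theta1_sub hτ]
  ring

end Theta

section KroneckerFunction

variable {τ : ℂ}

lemma theta1_fay (hτ : 0 < τ.im) (A B x y : ℂ) :
    theta1 τ (A + x) * theta1 τ (B + y) * (theta1 τ (x + y) * theta1 τ (A - B)) =
      theta1 τ (A + (x + y)) * theta1 τ B * (theta1 τ x * theta1 τ (A - B - y)) +
        theta1 τ (B + (x + y)) * theta1 τ A * (theta1 τ (A - B + x) * theta1 τ y) := by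
  have three_term := theta1_three_term hτ ((A + x + B + y) / 2) ((A + x - B - y) / 2)
    ((x + y + A - B) / 2) ((x + y - A + B) / 2)
  have odd : theta1 τ y = -theta1 τ (-y) := by rw [theta1_neg, neg_neg]
  rw [odd, mul_neg, mul_neg, ← sub_eq_add_neg]
  convert three_term using 4 <;> ring_nf

lemma sigmaK_mul_sigmaK (hτ : 0 < τ.im) {A B x y : ℂ} (hA : theta1 τ A ≠ 0)
    (hB : theta1 τ B ≠ 0) (hAB : theta1 τ (A - B) ≠ 0) (hx : theta1 τ x ≠ 0)
    (hy : theta1 τ y ≠ 0) (hxy : theta1 τ (x + y) ≠ 0) :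
    sigmaK τ A x * sigmaK τ B y =
      sigmaK τ B (x + y) * sigmaK τ (A - B) x + sigmaK τ (B - A) y * sigmaK τ A (x + y) := by
  have hBA : theta1 τ (B - A) = -theta1 τ (A - B) := by rw [← theta1_neg, neg_sub]
  have hBAy : theta1 τ (B - A + y) = -theta1 τ (A - B - y) := by rw [← theta1_neg]; ring_nf
  rw [sigmaK, sigmaK, sigmaK, sigmaK, sigmaK, sigmaK, hBA, hBAy]
  field_simp
  linear_combination deriv (theta1 τ) 0 ^ 2 * theta1_fay hτ A B x y

lemma sigmaK_add_one (τ u z : ℂ) : sigmaK τ (u + 1) z = sigmaK τ u z := by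
  rw [sigmaK, add_right_comm, theta1_add_one, theta1_add_one, mul_neg, neg_mul, neg_div_neg_eq,
    sigmaK]

lemma sigmaK_add_tau (hτ : 0 < τ.im) (u z : ℂ) :
    sigmaK τ (u + τ) z = exp (-(2 * Real.pi * I * z)) * sigmaK τ u z := by
  have factor : exp (-(Real.pi * I * (τ + 2 * (u + z)))) =
      exp (-(2 * Real.pi * I * z)) * exp (-(Real.pi * I * (τ + 2 * u))) := by
    rw [← exp_add]
    ring_nf
  have hne := exp_ne_zero (-(Real.pi * I * (τ + 2 * u)))
  rw [sigmaK, sigmaK, add_right_comm, theta1_add_tau hτ, theta1_add_tau hτ, factor]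
  field_simp

/-- The Kronecker function with characteristic `(p, q)`: the translate of `σ(·, x)` by `pτ + q`,
multiplied by the exponential that makes it `1`-periodic in both `p` and `q`. -/
def sigmaChar (τ p q w x : ℂ) : ℂ :=
  exp (2 * Real.pi * I * p * x) * sigmaK τ (w + (p * τ + q)) x

lemma sigmaChar_periodic_left (hτ : 0 < τ.im) (q w x : ℂ) :
    Function.Periodic (fun p => sigmaChar τ p q w x) 1 := by
  intro p
  simp only [sigmaChar]
  rw [show w + ((p + 1) * τ + q) = w + (p * τ + q) + τ by ring, sigmaK_add_tau hτ, ← mul_assoc,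
    ← exp_add]
  ring_nf

lemma sigmaChar_periodic_right (τ p w x : ℂ) :
    Function.Periodic (fun q => sigmaChar τ p q w x) 1 := by
  intro q
  simp only [sigmaChar]
  rw [← add_assoc (p * τ), ← add_assoc, sigmaK_add_one]

lemma sigmaChar_mul_sigmaChar (hτ : 0 < τ.im) {u v x y p q p' q' : ℂ}
    (hx : theta1 τ x ≠ 0) (hy : theta1 τ y ≠ 0) (hxy : theta1 τ (x + y) ≠ 0)
    (hu : theta1 τ (u + (p * τ + q)) ≠ 0) (huv : theta1 τ (u + v + (p' * τ + q')) ≠ 0)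
    (hv : theta1 τ (-v + ((p - p') * τ + (q - q'))) ≠ 0) :
    sigmaChar τ p q u x * sigmaChar τ p' q' (u + v) y =
      sigmaChar τ p' q' (u + v) (x + y) * sigmaChar τ (p - p') (q - q') (-v) x +
        sigmaChar τ (p' - p) (q' - q) v y * sigmaChar τ p q u (x + y) := by
  have diff : u + (p * τ + q) - (u + v + (p' * τ + q')) =
      -v + ((p - p') * τ + (q - q')) := by ring
  have diff' : u + v + (p' * τ + q') - (u + (p * τ + q)) =
      v + ((p' - p) * τ + (q' - q)) := by ring
  have fay := sigmaK_mul_sigmaK hτ hu huv (diff ▸ hv) hx hy hxy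
  rw [diff, diff'] at fay
  simp only [sigmaChar]
  rw [mul_mul_mul_comm, fay, mul_mul_mul_comm (exp _) _ (exp _),
    mul_mul_mul_comm (exp _) _ (exp _), ← exp_add, ← exp_add, ← exp_add, mul_add]
  ring_nf

lemma theta1_eq_zero_periodic_left (hτ : 0 < τ.im) (q w : ℂ) :
    Function.Periodic (fun p => theta1 τ (w + (p * τ + q)) = 0) 1 := by
  intro p
  simp only [show w + ((p + 1) * τ + q) = w + (p * τ + q) + τ by ring, theta1_add_tau hτ,
    neg_mul, neg_eq_zero, mul_eq_zero, exp_ne_zero, false_or]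

lemma theta1_eq_zero_periodic_right (τ p w : ℂ) :
    Function.Periodic (fun q => theta1 τ (w + (p * τ + q)) = 0) 1 := by
  intro q
  simp only [← add_assoc, theta1_add_one, neg_eq_zero]

end KroneckerFunction

section ScalarsOnUnits

variable {S M : Type*} [Group S] [Monoid M] [MulAction S M] [SMulCommClass S M M]
  [IsScalarTower S M M]

instance isScalarTower_units_self : IsScalarTower S Mˣ Mˣ :=
  ⟨fun _ _ _ => Units.ext (smul_mul_assoc _ _ _)⟩

instance smulCommClass_units_self : SMulCommClass S Mˣ Mˣ :=
  ⟨fun _ _ _ => Units.ext (mul_smul_comm _ _ _).symm⟩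

end ScalarsOnUnits

section ProjectiveRepresentation

variable {G R m : Type*} [CommRing R] [Fintype m] [DecidableEq m]

/-- `Z` is a projective representation of `G`: multiplicative up to invertible scalars. -/
def IsProjectiveRep [Add G] (Z : G → GL m R) : Prop :=
  ∀ a b, ∃ q : Rˣ, Z a * Z b = q • Z (a + b)

/-- The tensor `∑ c_a Z_a⁻¹ ⊗ Z_a`, placed in the factors `1` and `2` of a triple product. -/
def leg12 [Fintype G] (Z : G → GL m R) (c : G → R) : Matrix ((m × m) × m) ((m × m) × m) R :=
  ∑ a, c a • (((Z a)⁻¹.val ⊗ₖ (Z a).val) ⊗ₖ (1 : Matrix m m R))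

/-- The tensor `∑ c_a Z_a⁻¹ ⊗ Z_a`, placed in the factors `1` and `3` of a triple product. -/
def leg13 [Fintype G] (Z : G → GL m R) (c : G → R) : Matrix ((m × m) × m) ((m × m) × m) R :=
  ∑ a, c a • (((Z a)⁻¹.val ⊗ₖ (1 : Matrix m m R)) ⊗ₖ (Z a).val)

/-- The tensor `∑ c_a Z_a⁻¹ ⊗ Z_a`, placed in the factors `2` and `3` of a triple product. -/
def leg23 [Fintype G] (Z : G → GL m R) (c : G → R) : Matrix ((m × m) × m) ((m × m) × m) R :=
  ∑ a, c a • (((1 : Matrix m m R) ⊗ₖ (Z a)⁻¹.val) ⊗ₖ (Z a).val)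

/-- `Z_a⁻¹ ⊗ Z_a Z_b⁻¹ ⊗ Z_b`, in terms of which all products of two legs are expanded. -/
def tripleTensor (Z : G → GL m R) (a b : G) : Matrix ((m × m) × m) ((m × m) × m) R :=
  ((Z a)⁻¹.val ⊗ₖ (Z a * (Z b)⁻¹).val) ⊗ₖ (Z b).val

lemma IsProjectiveRep.exists_sub [AddGroup G] {Z : G → GL m R} (hZ : IsProjectiveRep Z) (a b : G) :
    ∃ q : Rˣ, Z (a - b) = q • (Z a * (Z b)⁻¹) := by
  obtain ⟨q, hq⟩ := hZ (a - b) b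
  refine ⟨q, ?_⟩
  rw [← smul_mul_assoc, eq_mul_inv_iff_mul_eq, hq, sub_add_cancel]

variable [Fintype G]

lemma leg12_mul_leg23 (Z : G → GL m R) (c c' : G → R) :
    leg12 Z c * leg23 Z c' = ∑ a, ∑ b, (c a * c' b) • tripleTensor Z a b := by
  simp only [leg12, leg23, tripleTensor, Finset.sum_mul_sum, smul_mul_smul_comm,
    ← mul_kronecker_mul, mul_one, one_mul, Units.val_mul]

variable [AddGroup G] {Z : G → GL m R}

lemma IsProjectiveRep.leg13_mul_leg12 (hZ : IsProjectiveRep Z) (c c' : G → R) :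
    leg13 Z c * leg12 Z c' = ∑ a, ∑ b, (c b * c' (a - b)) • tripleTensor Z a b := by
  have tensor (a b : G) : tripleTensor Z a b =
      (((Z b)⁻¹.val * (Z (a - b))⁻¹.val) ⊗ₖ (Z (a - b)).val) ⊗ₖ (Z b).val := by
    obtain ⟨q, hq⟩ := hZ.exists_sub a b
    have inv_mul_inv : (Z b)⁻¹ * (Z (a - b))⁻¹ = q⁻¹ • (Z a)⁻¹ := by
      rw [← _root_.mul_inv_rev, hq, smul_mul_assoc, inv_mul_cancel_right, Units.smul_inv]
    rw [← Units.val_mul, inv_mul_inv, hq, Units.val_smul, Units.val_smul, smul_kronecker,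
      kronecker_smul, smul_smul, inv_mul_cancel, one_smul, tripleTensor]
  rw [Finset.sum_comm, leg13, leg12, Finset.sum_mul_sum]
  refine Finset.sum_congr rfl fun b _ => ?_
  rw [← (Equiv.subRight b).sum_comp]
  simp only [Equiv.subRight_apply, tensor, smul_mul_smul_comm, ← mul_kronecker_mul, mul_one,
    one_mul]

lemma IsProjectiveRep.leg23_mul_leg13 (hZ : IsProjectiveRep Z) (c c' : G → R) :
    leg23 Z c * leg13 Z c' = ∑ a, ∑ b, (c (b - a) * c' a) • tripleTensor Z a b := by
  have tensor (a b : G) : tripleTensor Z a b =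
      ((Z a)⁻¹.val ⊗ₖ (Z (b - a))⁻¹.val) ⊗ₖ ((Z (b - a)).val * (Z a).val) := by
    obtain ⟨q, hq⟩ := hZ.exists_sub b a
    have inv_eq : (Z (b - a))⁻¹ = q⁻¹ • (Z a * (Z b)⁻¹) := by
      rw [hq, Units.smul_inv, _root_.mul_inv_rev, inv_inv]
    rw [← Units.val_mul, inv_eq, hq, smul_mul_assoc, inv_mul_cancel_right, Units.val_smul,
      Units.val_smul, kronecker_smul, kronecker_smul, smul_kronecker, smul_smul, mul_inv_cancel,
      one_smul, tripleTensor]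
  rw [leg23, leg13, Finset.sum_mul_sum, Finset.sum_comm]
  refine Finset.sum_congr rfl fun a _ => ?_
  rw [← (Equiv.subRight a).sum_comp]
  simp only [Equiv.subRight_apply, tensor, smul_mul_smul_comm, ← mul_kronecker_mul, mul_one,
    one_mul]

theorem IsProjectiveRep.associative_yang_baxter (hZ : IsProjectiveRep Z)
    {c₁ c₂ c₃ c₄ c₅ c₆ : G → R}
    (hc : ∀ a b, c₁ a * c₂ b = c₃ b * c₄ (a - b) + c₅ (b - a) * c₆ a) :
    leg12 Z c₁ * leg23 Z c₂ = leg13 Z c₃ * leg12 Z c₄ + leg23 Z c₅ * leg13 Z c₆ := by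
  simp only [leg12_mul_leg23, hZ.leg13_mul_leg12, hZ.leg23_mul_leg13, hc, add_smul,
    Finset.sum_add_distrib]

end ProjectiveRepresentation

section WeylSystem

lemma pow_mul_pow_of_mul_eq_smul_mul {S M : Type*} [Monoid S] [Monoid M] [MulAction S M]
    [IsScalarTower S M M] [SMulCommClass S M M] {q : S} {g h : M} (hq : g * h = q • (h * g))
    (k l : ℕ) : g ^ k * h ^ l = q ^ (k * l) • (h ^ l * g ^ k) := by
  have hg (l : ℕ) : g * h ^ l = q ^ l • (h ^ l * g) := by
    have : SemiconjBy g h (q • h) := by rw [SemiconjBy, hq, smul_mul_assoc]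
    rw [(this.pow_right l).eq, smul_pow, smul_mul_assoc]
  have : SemiconjBy (h ^ l) (q ^ l • g) g := by
    rw [SemiconjBy, hg, mul_smul_comm]
  rw [← (this.pow_right k).eq, smul_pow, mul_smul_comm, ← pow_mul, mul_comm l k]

variable {n : ℕ} {R m : Type*} [CommRing R] [Fintype m] [DecidableEq m]

/-- The elements `h ^ k * g ^ l` for residues `k, l` modulo `n`, when `g` and `h` have order
dividing `n`. -/
def weylSystem (g h : GL m R) (a : ZMod n × ZMod n) : GL m R :=
  h ^ a.1.val * g ^ a.2.val

lemma weylSystem_natCast {g h : GL m R} (hg : g ^ n = 1) (hh : h ^ n = 1) (k l : ℕ) :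
    weylSystem g h ((k : ZMod n), (l : ZMod n)) = h ^ k * g ^ l := by
  rw [weylSystem, ZMod.val_natCast, ZMod.val_natCast, ← pow_eq_pow_mod k hh, ← pow_eq_pow_mod l hg]

lemma isProjectiveRep_weylSystem [NeZero n] {g h : GL m R} {q : Rˣ} (hg : g ^ n = 1)
    (hh : h ^ n = 1) (hq : g * h = q • (h * g)) :
    IsProjectiveRep (weylSystem g h : ZMod n × ZMod n → GL m R) := by
  rintro ⟨k, l⟩ ⟨k', l'⟩
  refine ⟨q ^ (l.val * k'.val), ?_⟩
  simp only [weylSystem, Prod.mk_add_mk, ZMod.val_add, ← pow_eq_pow_mod _ hg,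
    ← pow_eq_pow_mod _ hh, pow_add]
  rw [mul_assoc, ← mul_assoc (g ^ _), pow_mul_pow_of_mul_eq_smul_mul hq, smul_mul_assoc,
    mul_smul_comm]
  simp only [mul_assoc]

end WeylSystem

section ClockAndShift

variable (n d : ℕ)

lemma val_finRotate_pow (k : ℕ) (i : Fin n) : ((finRotate n ^ k) i : ℕ) = (i + k) % n := by
  have := i.neZero
  induction k with
  | zero => simp [Nat.mod_eq_of_lt]
  | succ k ih => simp [pow_succ', finRotate_apply, Fin.val_add, ih, add_assoc]

lemma finRotate_pow_self : finRotate n ^ n = 1 := by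
  ext i
  simp [val_finRotate_pow, Nat.mod_eq_of_lt]

lemma Ymat_eq_permMatrixHom : Ymat n = permMatrixHom (finRotate n)⁻¹ := by
  ext i j
  have := i.neZero
  simp [Ymat, Equiv.toPEquiv, Fin.ext_iff, finRotate_apply, Fin.val_add, eq_comm]

lemma Ymat_pow_self : Ymat n ^ n = 1 := by
  rw [Ymat_eq_permMatrixHom, ← map_pow, inv_pow, finRotate_pow_self, inv_one, map_one]

variable [NeZero n]

lemma eps_pow_self : eps n d ^ n = 1 := by
  rw [eps, ← exp_nat_mul, mul_div_cancel₀ _ (NeZero.ne (n : ℂ)), mul_comm,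
    exp_nat_mul_two_pi_mul_I]

lemma Xmat_pow_self : Xmat n d ^ n = 1 := by
  have pow_pow_self (i : Fin n) : (eps n d ^ (i : ℕ)) ^ n = 1 := by
    rw [pow_right_comm, eps_pow_self, one_pow]
  simp only [Xmat, diagonal_pow, Pi.pow_def, pow_pow_self, diagonal_one]

lemma Ymat_mul_Xmat : Ymat n * Xmat n d = eps n d • (Xmat n d * Ymat n) := by
  ext i j
  simp only [Ymat, Xmat, Matrix.smul_apply, mul_diagonal, diagonal_mul, of_apply, smul_eq_mul]
  split_ifs with h
  · rw [h, ← pow_eq_pow_mod _ (eps_pow_self n d), pow_succ']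
    ring
  · ring

/-- `ε` as a unit. -/
def epsUnit : ℂˣ := .ofPowEqOne (eps n d) n (eps_pow_self n d) (NeZero.ne n)

/-- `X` as an invertible matrix. -/
def clock : GL (Fin n) ℂ := .ofPowEqOne (Xmat n d) n (Xmat_pow_self n d) (NeZero.ne n)

/-- `Y` as an invertible matrix. -/
def shift : GL (Fin n) ℂ := .ofPowEqOne (Ymat n) n (Ymat_pow_self n) (NeZero.ne n)

lemma shift_mul_clock : shift n * clock n d = epsUnit n d • (clock n d * shift n) :=
  Units.ext (Ymat_mul_Xmat n d)

lemma clock_inv_mul_shift :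
    (clock n d)⁻¹ * shift n = epsUnit n d • (shift n * (clock n d)⁻¹) := by
  rw [inv_mul_eq_iff_eq_mul, mul_smul_comm, ← mul_assoc, ← smul_mul_assoc, ← shift_mul_clock,
    mul_inv_cancel_right]

end ClockAndShift

section Coefficients

variable {n d : ℕ} {τ : ℂ}

lemma periodic_div_congr {K α : Type*} [Field K] [CharZero K] [NeZero n] {f : K → α}
    (hf : Function.Periodic f 1) (d : ℤ) {k k' : ℤ} (h : (k : ZMod n) = k') :
    f (d * k / n) = f (d * k' / n) := by
  obtain ⟨c, hc⟩ := (ZMod.intCast_eq_intCast_iff_dvd_sub k k' n).mp h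
  have shift : (d * k' / n : K) = d * k / n + (d * c : ℤ) * 1 := by
    have := NeZero.ne (n : K)
    rw [eq_add_of_sub_eq hc]
    push_cast
    field_simp
    ring
  rw [shift, hf.int_mul]

/-- The coefficients `c_{(k,l)}(w; x)` as a function of the residues of `k` and `l` modulo `n`. -/
def residueCoeff (n d : ℕ) (τ w x : ℂ) (a : ZMod n × ZMod n) : ℂ :=
  ckl n d τ a.1.val a.2.val w x

/-- No point `w + (d/n)(kτ + l)` with integers `k` and `l` is a pole of `σ(·, x)`. -/
def AvoidsPoles (n d : ℕ) (τ w : ℂ) : Prop :=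
  ∀ k l : ℤ, theta1 τ (w + (d * k / n * τ + d * l / n)) ≠ 0

lemma ckl_eq_sigmaChar (k l : ℕ) (w x : ℂ) :
    ckl n d τ k l w x = sigmaChar τ (d * k / n) (d * l / n) w x := by
  rw [ckl, sigmaChar]
  ring_nf

variable [NeZero n]

lemma residueCoeff_intCast (hτ : 0 < τ.im) (k l : ℤ) (w x : ℂ) :
    residueCoeff n d τ w x ((k : ZMod n), (l : ZMod n)) =
      sigmaChar τ (d * k / n) (d * l / n) w x := by
  have val_cast (a : ℤ) : (((a : ZMod n).val : ℤ) : ZMod n) = a := by simp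
  have left (q : ℂ) := periodic_div_congr (sigmaChar_periodic_left hτ q w x) d (val_cast k)
  have right (p : ℂ) := periodic_div_congr (sigmaChar_periodic_right τ p w x) d (val_cast l)
  simp only [Int.cast_natCast] at left right
  rw [residueCoeff, ckl_eq_sigmaChar, left, right]

lemma residueCoeff_natCast (hτ : 0 < τ.im) (k l : ℕ) (w x : ℂ) :
    residueCoeff n d τ w x ((k : ZMod n), (l : ZMod n)) = ckl n d τ k l w x := by
  simpa only [Int.cast_natCast, ckl_eq_sigmaChar] using residueCoeff_intCast hτ k l w x

lemma residueCoeff_mul_residueCoeff (hτ : 0 < τ.im) {u v x y : ℂ} (hx : theta1 τ x ≠ 0)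
    (hy : theta1 τ y ≠ 0) (hxy : theta1 τ (x + y) ≠ 0) (hu : AvoidsPoles n d τ u)
    (hv : AvoidsPoles n d τ (-v)) (huv : AvoidsPoles n d τ (u + v)) (a b : ZMod n × ZMod n) :
    residueCoeff n d τ u x a * residueCoeff n d τ (u + v) y b =
      residueCoeff n d τ (u + v) (x + y) b * residueCoeff n d τ (-v) x (a - b) +
        residueCoeff n d τ v y (b - a) * residueCoeff n d τ u (x + y) a := by
  have cast_surjective :=
    (ZMod.intCast_surjective (n := n)).prodMap (ZMod.intCast_surjective (n := n))
  obtain ⟨⟨k, l⟩, rfl⟩ := cast_surjective a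
  obtain ⟨⟨k', l'⟩, rfl⟩ := cast_surjective b
  have hv' := hv (k - k') (l - l')
  simp only [Prod.map_apply, Prod.mk_sub_mk, ← Int.cast_sub, residueCoeff_intCast hτ]
  push_cast at hv' ⊢
  simp only [mul_sub, sub_div] at hv' ⊢
  exact sigmaChar_mul_sigmaChar hτ hx hy hxy (hu k l) (huv k' l') hv'

lemma natCast_succ_bijective (n : ℕ) [NeZero n] :
    Function.Bijective (fun i : Fin n => ((i + 1 : ℕ) : ZMod n)) := by
  rw [Fintype.bijective_iff_surjective_and_card, ZMod.card, Fintype.card_fin]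
  refine ⟨fun a => ⟨⟨(a - 1).val, ZMod.val_lt _⟩, ?_⟩, rfl⟩
  simp

lemma avoidsPoles_of_le (hτ : 0 < τ.im) {w : ℂ}
    (hw : ∀ k l : ℕ, 1 ≤ k → k ≤ n → 1 ≤ l → l ≤ n →
      theta1 τ (w + ((d : ℂ) / n) * (k * τ + l)) ≠ 0) : AvoidsPoles n d τ w := by
  intro k l
  obtain ⟨i, hi⟩ := (natCast_succ_bijective n).surjective k
  obtain ⟨j, hj⟩ := (natCast_succ_bijective n).surjective l
  simp only [← Int.cast_natCast (R := ZMod n)] at hi hj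
  have left (q : ℂ) := periodic_div_congr (theta1_eq_zero_periodic_left hτ q w) d hi
  have right (p : ℂ) := periodic_div_congr (theta1_eq_zero_periodic_right τ p w) d hj
  simp only [Int.cast_natCast] at left right
  have ne_zero := hw (i + 1) (j + 1) (by omega) i.isLt (by omega) j.isLt
  rw [ne_eq, ← left, ← right]
  convert ne_zero using 3
  ring

end Coefficients

section EllipticRMatrix

variable {n d : ℕ} [NeZero n]

/-- The matrices `Z_{(k,l)} = Y^k X^{-l}`, indexed by residues modulo `n`. -/
def clockShiftRep (n d : ℕ) [NeZero n] : ZMod n × ZMod n → GL (Fin n) ℂ :=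
  weylSystem (clock n d)⁻¹ (shift n)

lemma clock_inv_pow_self : (clock n d)⁻¹ ^ n = 1 := by
  rw [inv_pow, clock, Units.pow_ofPowEqOne, inv_one]

lemma isProjectiveRep_clockShiftRep (n d : ℕ) [NeZero n] :
    IsProjectiveRep (clockShiftRep n d) :=
  isProjectiveRep_weylSystem clock_inv_pow_self (Units.pow_ofPowEqOne _ _)
    (clock_inv_mul_shift n d)

lemma clockShiftRep_natCast (k l : ℕ) :
    clockShiftRep n d ((k : ZMod n), (l : ZMod n)) = shift n ^ k * (clock n d)⁻¹ ^ l :=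
  weylSystem_natCast clock_inv_pow_self (Units.pow_ofPowEqOne _ _) k l

lemma Zmat_eq_clockShiftRep (k l : ℕ) :
    Zmat n d k l = (clockShiftRep n d ((k : ZMod n), (l : ZMod n))).val := by
  rw [clockShiftRep_natCast, Units.val_mul, Units.val_pow_eq_pow_val, Units.val_pow_eq_pow_val,
    coe_units_inv]
  rfl

lemma Zdual_eq_clockShiftRep_inv (k l : ℕ) :
    Zdual n d k l = (n : ℂ)⁻¹ • (clockShiftRep n d ((k : ZMod n), (l : ZMod n)))⁻¹.val := by
  rw [clockShiftRep_natCast, _root_.mul_inv_rev, ← inv_pow, ← inv_pow, inv_inv, Units.val_mul,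
    Units.val_pow_eq_pow_val, Units.val_pow_eq_pow_val, coe_units_inv]
  rfl

lemma sum_natCast_succ {M : Type*} [AddCommMonoid M] (F : ZMod n × ZMod n → M) :
    ∑ p : Fin n × Fin n, F (((p.1 + 1 : ℕ) : ZMod n), ((p.2 + 1 : ℕ) : ZMod n)) = ∑ a, F a :=
  ((natCast_succ_bijective n).prodMap (natCast_succ_bijective n)).sum_comp F

variable {τ : ℂ}

lemma r12_eq_leg12 (hτ : 0 < τ.im) (w x : ℂ) :
    r12 n d τ w x = (n : ℂ)⁻¹ • leg12 (clockShiftRep n d) (residueCoeff n d τ w x) := by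
  rw [leg12, ← sum_natCast_succ, Finset.smul_sum, r12]
  simp only [residueCoeff_natCast hτ, Zmat_eq_clockShiftRep, Zdual_eq_clockShiftRep_inv,
    smul_kronecker, smul_comm (n : ℂ)⁻¹]

lemma r13_eq_leg13 (hτ : 0 < τ.im) (w x : ℂ) :
    r13 n d τ w x = (n : ℂ)⁻¹ • leg13 (clockShiftRep n d) (residueCoeff n d τ w x) := by
  rw [leg13, ← sum_natCast_succ, Finset.smul_sum, r13]
  simp only [residueCoeff_natCast hτ, Zmat_eq_clockShiftRep, Zdual_eq_clockShiftRep_inv,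
    smul_kronecker, smul_comm (n : ℂ)⁻¹]

lemma r23_eq_leg23 (hτ : 0 < τ.im) (w x : ℂ) :
    r23 n d τ w x = (n : ℂ)⁻¹ • leg23 (clockShiftRep n d) (residueCoeff n d τ w x) := by
  rw [leg23, ← sum_natCast_succ, Finset.smul_sum, r23]
  simp only [residueCoeff_natCast hτ, Zmat_eq_clockShiftRep, Zdual_eq_clockShiftRep_inv,
    smul_kronecker, kronecker_smul, smul_comm (n : ℂ)⁻¹]

end EllipticRMatrix

theorem stmt13_general (n d : ℕ) [NeZero n] (τ : ℂ) (hτ : 0 < τ.im) (u v x₁ x₂ x₃ : ℂ)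
    (h21 : theta1 τ (x₂ - x₁) ≠ 0) (h32 : theta1 τ (x₃ - x₂) ≠ 0)
    (h31 : theta1 τ (x₃ - x₁) ≠ 0)
    (hpol : ∀ w ∈ ({u, -v, u + v} : Set ℂ), ∀ k l : ℕ,
      1 ≤ k → k ≤ n → 1 ≤ l → l ≤ n →
      theta1 τ (w + ((d : ℂ) / n) * (k * τ + l)) ≠ 0) :
    r12 n d τ u (x₂ - x₁) * r23 n d τ (u + v) (x₃ - x₂)
      = r13 n d τ (u + v) (x₃ - x₁) * r12 n d τ (-v) (x₂ - x₁) +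
        r23 n d τ v (x₃ - x₂) * r13 n d τ u (x₃ - x₁) := by
  have avoidsPoles {w : ℂ} (hw : w ∈ ({u, -v, u + v} : Set ℂ)) : AvoidsPoles n d τ w :=
    avoidsPoles_of_le hτ (hpol w hw)
  have add_eq : x₃ - x₁ = (x₂ - x₁) + (x₃ - x₂) := by ring
  rw [add_eq] at h31 ⊢
  have fay := residueCoeff_mul_residueCoeff hτ h21 h32 h31
    (avoidsPoles (w := u) (by simp)) (avoidsPoles (w := -v) (by simp))
    (avoidsPoles (w := u + v) (by simp))
  rw [r12_eq_leg12 hτ, r12_eq_leg12 hτ, r13_eq_leg13 hτ, r13_eq_leg13 hτ, r23_eq_leg23 hτ,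
    r23_eq_leg23 hτ, smul_mul_smul_comm, smul_mul_smul_comm, smul_mul_smul_comm, ← smul_add,
    (isProjectiveRep_clockShiftRep n d).associative_yang_baxter fay]

/-- The elliptic `r`-matrix satisfies the associative Yang–Baxter equation. -/
theorem stmt13 (n d : ℕ) (hd : 0 < d) (hdn : d < n) (hcop : Nat.gcd d n = 1)
    (τ : ℂ) (hτ : 0 < τ.im) (u v x₁ x₂ x₃ : ℂ)
    (h21 : theta1 τ (x₂ - x₁) ≠ 0) (h32 : theta1 τ (x₃ - x₂) ≠ 0)
    (h31 : theta1 τ (x₃ - x₁) ≠ 0)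
    (hpol : ∀ w ∈ ({u, v, -v, u + v} : Set ℂ), ∀ k l : ℕ,
      1 ≤ k → k ≤ n → 1 ≤ l → l ≤ n →
      theta1 τ (w + ((d : ℂ) / n) * (k * τ + l)) ≠ 0) :
    r12 n d τ u (x₂ - x₁) * r23 n d τ (u + v) (x₃ - x₂)
      = r13 n d τ (u + v) (x₃ - x₁) * r12 n d τ (-v) (x₂ - x₁) +
        r23 n d τ v (x₃ - x₂) * r13 n d τ u (x₃ - x₁) := by
  have : NeZero n := ⟨(hd.trans hdn).ne'⟩
  exact stmt13_general n d τ hτ u v x₁ x₂ x₃ h21 h32 h31 fun w hw => hpol w (by aesop)
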